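/- arXiv:2110.10458 — 2 statements merged into one kernel-verified Lean document; each statement's English description precedes it below -/
import Mathlib

section
/- For every n ≥ 1: (a) dt_n(α·x) = αⁿ·dt_n(x) for all x ∈ H_n(ℍ_ℂ) and α ∈ ℂ; (b) there exist complex coefficients α_{σ,π}, indexed by pairs of permutations σ,π of {1,…,n}, such that dt_n(x) = Σ_{σ,π} α_{σ,π} · x_{σ(1)π(1)} · x_{σ(2)π(2)} · ⋯ · x_{σ(n)π(n)} for all x ∈ H_n(ℍ_ℂ); (c) for all x, y ∈ H_n(ℍ_ℂ), the function λ ↦ dt_n(λ·y + x) is a complex polynomial in λ of degree at most n whose coefficient at λⁿ is dt_n(y) and whose constant term is dt_n(x). -/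
/-!
The key point is that the determinant of a hermitian matrix is a linear combination of ordered
products with one factor from each row and each column (`D_form`), by induction on the size.

Fix all entries of `A` except the upper left one, `a`. For `a ≠ 0` the recursion expresses the
determinant as `a` times the smaller determinant of `A_{ij} - a⁻¹ A_{i0} A_{0j}`. Expanding the
ordered products of the smaller determinant in powers of `a⁻¹` (`val_schur`) gives
`a P + Q + a⁻¹ R(a⁻¹)` where `P`, `Q` and the polynomial `R` do not depend on `a`. The determinant is
continuous at `a = 0`, so `R` must vanish and `a P + Q` is the determinant for all `a`, including
`a = 0` (`laurent`). Both `a P` and `Q` are combinations of ordered products of the required kind: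
`a P` puts the position `(0, 0)` in front, and each term of `Q` replaces one factor `A_{ij}` by
`A_{i0} A_{0j}`, which again uses each row and each column once.

Homogeneity is immediate from this form. For the pencil `z • B + A`, each ordered product has
polynomial components in `z` of degree at most the number of factors, with top coefficient the
same product for `B` (`val_pencil`). Since the determinants are scalar (`D_scalar`), the `re`
component is the required polynomial.
-/

noncomputable section

open Matrix

/-- The biquaternions `ℍ_ℂ`: quaternions with complex coefficients. -/
abbrev HC : Type := Quaternion ℂ

/-- The embedding `ℂ ⊆ ℍ_ℂ` as scalar biquaternions. -/
def cq (z : ℂ) : HC := ⟨z, 0, 0, 0⟩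

/-- The `ℂ`-linear involution `x ↦ x⋄` (quaternion conjugation). -/
def qdia (x : HC) : HC := ⟨x.re, -x.imI, -x.imJ, -x.imK⟩

/-- Coefficientwise complex conjugation `x ↦ x̄`. -/
def qbar (x : HC) : HC :=
  ⟨starRingEnd ℂ x.re, starRingEnd ℂ x.imI, starRingEnd ℂ x.imJ, starRingEnd ℂ x.imK⟩

/-- The conjugate-linear involution `x* = (x̄)⋄`. -/
def qstar (x : HC) : HC := qdia (qbar x)

/-- The natural (Euclidean/product) topology on the biquaternions `ℍ_ℂ ≅ ℂ⁴`. -/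
instance : TopologicalSpace HC :=
  TopologicalSpace.induced (fun q : HC => (q.re, q.imI, q.imJ, q.imK)) inferInstance

/-- The 2×2 complex matrix `x̂` associated to a biquaternion `x`. -/
def hat (x : HC) : Matrix (Fin 2) (Fin 2) ℂ :=
  !![x.re + Complex.I * x.imI, x.imJ + Complex.I * x.imK;
     -x.imJ + Complex.I * x.imK, x.re - Complex.I * x.imI]

/-- The `2n × 2n` complex matrix `Â` obtained by replacing every biquaternion entry `a`
of `A` by the 2×2 block `â`. -/
def hatM {n : ℕ} (A : Matrix (Fin n) (Fin n) HC) :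
    Matrix (Fin n × Fin 2) (Fin n × Fin 2) ℂ :=
  Matrix.of fun p q => hat (A p.1 q.1) p.2 q.2

/-- `A` is `⋄`-hermitian: `Aᵈ = A`, i.e. `(A j i)⋄ = A i j` for all `i j`.
`H_n(ℍ_ℂ)` is the collection of all such matrices. -/
def IsHerm {n : ℕ} (A : Matrix (Fin n) (Fin n) HC) : Prop :=
  ∀ i j, qdia (A j i) = A i j

/-- The defining properties of the sequence of determinants `(dt_n)_{n ≥ 1}`:
`D n` plays the role of `dt_{n+1} : H_{n+1}(ℍ_ℂ) → ℍ_ℂ`.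
(i) continuity on `H_{n+1}(ℍ_ℂ)`; (ii) `dt₁((x₁₁)) = x₁₁`;
(iii) the inductive formula for `dt_{n+1}` when `x₁₁ ≠ 0`. -/
def IsDtSeq (D : ∀ n : ℕ, Matrix (Fin (n + 1)) (Fin (n + 1)) HC → HC) : Prop :=
  (∀ n : ℕ, ContinuousOn (D n) {A | IsHerm A}) ∧
  (∀ A : Matrix (Fin 1) (Fin 1) HC, IsHerm A → D 0 A = A 0 0) ∧
  (∀ (n : ℕ) (A : Matrix (Fin (n + 2)) (Fin (n + 2)) HC), IsHerm A → A 0 0 ≠ 0 →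
    D (n + 1) A = A 0 0 *
      D n (Matrix.of fun i j : Fin (n + 1) =>
        A i.succ j.succ - Ring.inverse (A 0 0) * A i.succ 0 * A 0 j.succ))

open Polynomial Filter Topology
open scoped Quaternion

/-! ### Componentwise arithmetic of biquaternions -/

@[simp] lemma cq_re (z : ℂ) : (cq z).re = z := rfl
@[simp] lemma cq_imI (z : ℂ) : (cq z).imI = 0 := rfl
@[simp] lemma cq_imJ (z : ℂ) : (cq z).imJ = 0 := rfl
@[simp] lemma cq_imK (z : ℂ) : (cq z).imK = 0 := rfl

@[simp] lemma qdia_re (x : HC) : (qdia x).re = x.re := rfl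
@[simp] lemma qdia_imI (x : HC) : (qdia x).imI = -x.imI := rfl
@[simp] lemma qdia_imJ (x : HC) : (qdia x).imJ = -x.imJ := rfl
@[simp] lemma qdia_imK (x : HC) : (qdia x).imK = -x.imK := rfl

lemma HC_smul_mul (a : ℂ) (x y : HC) : (a • x) * y = a • (x * y) := by
  ext <;> simp <;> ring

lemma HC_mul_smul (a : ℂ) (x y : HC) : x * (a • y) = a • (x * y) := by
  ext <;> simp <;> ring

lemma HC_zero_smul (x : HC) : (0 : ℂ) • x = 0 := by
  ext <;> simp

lemma HC_add_smul (a b : ℂ) (x : HC) : (a + b) • x = a • x + b • x := by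
  ext <;> simp <;> ring

/-! ### Ordered products and their linear combinations -/

/-- The ordered product of the entries of `A` at the positions listed in `L`. -/
def mon {n : ℕ} (A : Matrix (Fin n) (Fin n) HC) (L : List (Fin n × Fin n)) : HC :=
  (L.map fun p => A p.1 p.2).prod

/-- The value at `A` of a formal complex linear combination of ordered products, given as a list
of pairs (coefficient, positions). -/
def val {n : ℕ} (A : Matrix (Fin n) (Fin n) HC) (T : List (ℂ × List (Fin n × Fin n))) : HC :=
  (T.map fun p => p.1 • mon A p.2).sum

/-- The positions in `L` use every row index and every column index exactly once; equivalently
`L` lists the pairs `(σ k, π k)` for two permutations `σ`, `π`. -/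
def Good {n : ℕ} (L : List (Fin n × Fin n)) : Prop :=
  (L.map Prod.fst).Perm (List.finRange n) ∧ (L.map Prod.snd).Perm (List.finRange n)

/-! ### Biquaternions with polynomial components -/

/-- Componentwise evaluation at `t` of a quaternion with polynomial components. -/
def ev (t : ℂ) (q : Quaternion ℂ[X]) : HC :=
  ⟨q.re.eval t, q.imI.eval t, q.imJ.eval t, q.imK.eval t⟩

@[simp] lemma ev_re (t : ℂ) (q : Quaternion ℂ[X]) : (ev t q).re = q.re.eval t := rfl
@[simp] lemma ev_imI (t : ℂ) (q : Quaternion ℂ[X]) : (ev t q).imI = q.imI.eval t := rfl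
@[simp] lemma ev_imJ (t : ℂ) (q : Quaternion ℂ[X]) : (ev t q).imJ = q.imJ.eval t := rfl
@[simp] lemma ev_imK (t : ℂ) (q : Quaternion ℂ[X]) : (ev t q).imK = q.imK.eval t := rfl

lemma ev_mul (t : ℂ) (p q : Quaternion ℂ[X]) : ev t (p * q) = ev t p * ev t q := by
  ext <;> simp

lemma ev_add (t : ℂ) (p q : Quaternion ℂ[X]) : ev t (p + q) = ev t p + ev t q := by
  ext <;> simp

lemma ev_smul (t : ℂ) (p : ℂ[X]) (q : Quaternion ℂ[X]) :
    ev t (p • q) = p.eval t • ev t q := by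
  ext <;> simp

/-- A biquaternion as a quaternion with constant polynomial components. -/
def cst (x : HC) : Quaternion ℂ[X] := ⟨C x.re, C x.imI, C x.imJ, C x.imK⟩

@[simp] lemma cst_re (x : HC) : (cst x).re = C x.re := rfl
@[simp] lemma cst_imI (x : HC) : (cst x).imI = C x.imI := rfl
@[simp] lemma cst_imJ (x : HC) : (cst x).imJ = C x.imJ := rfl
@[simp] lemma cst_imK (x : HC) : (cst x).imK = C x.imK := rfl

lemma ev_cst (t : ℂ) (x : HC) : ev t (cst x) = x := by
  ext <;> simp

lemma ev_zero (t : ℂ) : ev t 0 = 0 := by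
  ext <;> simp

lemma cq_mul (a : ℂ) (x : HC) : cq a * x = a • x := by
  ext <;> simp

/-! ### Scalars and the involution -/

lemma inverse_cq {a : ℂ} (ha : a ≠ 0) : Ring.inverse (cq a) = cq a⁻¹ := by
  have h : cq a * cq a⁻¹ = 1 := by rw [cq_mul]; ext <;> simp [ha]
  have h' : cq a⁻¹ * cq a = 1 := by rw [cq_mul]; ext <;> simp [ha]
  exact Ring.inverse_unit ⟨cq a, cq a⁻¹, h, h'⟩

lemma qdia_mul (x y : HC) : qdia (x * y) = qdia y * qdia x := by
  ext <;> simp <;> ring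

lemma qdia_sub (x y : HC) : qdia (x - y) = qdia x - qdia y := by
  ext <;> simp <;> ring

lemma qdia_smul (a : ℂ) (x : HC) : qdia (a • x) = a • qdia x := by
  ext <;> simp

lemma eq_cq_of_qdia {x : HC} (h : qdia x = x) : x = cq x.re := by
  have h1 := congrArg (fun q : HC => q.imI) h
  have h2 := congrArg (fun q : HC => q.imJ) h
  have h3 := congrArg (fun q : HC => q.imK) h
  simp only [qdia_imI, qdia_imJ, qdia_imK] at h1 h2 h3
  ext <;> simp
  · exact self_eq_neg.mp h1.symm
  · exact self_eq_neg.mp h2.symm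
  · exact self_eq_neg.mp h3.symm

/-! ### Expanding ordered products of a Schur complement -/

/-- The position lists obtained from `L` (shifted by one in both indices) by replacing exactly one
position `(i + 1, j + 1)` by the two consecutive positions `(i + 1, 0)`, `(0, j + 1)`. -/
def qlists {n : ℕ} : List (Fin n × Fin n) → List (List (Fin (n + 1) × Fin (n + 1)))
  | [] => []
  | p :: L =>
      ((p.1.succ, 0) :: (0, p.2.succ) :: L.map (Prod.map Fin.succ Fin.succ)) ::
        (qlists L).map ((p.1.succ, p.2.succ) :: ·)

lemma qlists_fst {n : ℕ} (L : List (Fin n × Fin n)) : ∀ M ∈ qlists L,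
    (M.map Prod.fst).Perm (0 :: (L.map Prod.fst).map Fin.succ) := by
  induction L with
  | nil => simp [qlists]
  | cons p L ih =>
    intro M hM
    simp only [qlists, List.mem_cons, List.mem_map] at hM
    rcases hM with rfl | ⟨M, hM, rfl⟩
    · simpa [Prod.map_fst'] using List.Perm.swap _ _ _
    · simp only [List.map_cons]
      exact ((ih M hM).cons _).trans (List.Perm.swap _ _ _)

lemma qlists_snd {n : ℕ} (L : List (Fin n × Fin n)) : ∀ M ∈ qlists L,
    (M.map Prod.snd).Perm (0 :: (L.map Prod.snd).map Fin.succ) := by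
  induction L with
  | nil => simp [qlists]
  | cons p L ih =>
    intro M hM
    simp only [qlists, List.mem_cons, List.mem_map] at hM
    rcases hM with rfl | ⟨M, hM, rfl⟩
    · simp [Prod.map_snd']
    · simp only [List.map_cons]
      exact ((ih M hM).cons _).trans (List.Perm.swap _ _ _)

lemma good_qlists {n : ℕ} {L : List (Fin n × Fin n)} (hL : Good L) : ∀ M ∈ qlists L, Good M := by
  intro M hM
  refine ⟨(qlists_fst L M hM).trans ?_, (qlists_snd L M hM).trans ?_⟩ <;> rw [List.finRange_succ]
  · exact (hL.1.map _).cons _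
  · exact (hL.2.map _).cons _

lemma good_cons {n : ℕ} {L : List (Fin n × Fin n)} (hL : Good L) :
    Good ((0, 0) :: L.map (Prod.map Fin.succ Fin.succ)) := by
  refine ⟨?_, ?_⟩ <;> rw [List.finRange_succ]
  · simpa [Prod.map_fst'] using hL.1.map Fin.succ
  · simpa [Prod.map_snd'] using hL.2.map Fin.succ

/-- The matrix `A_{i+1,j+1} - t A_{i+1,0} A_{0,j+1}`; for `t = A₀₀⁻¹` it is the Schur complement of
`A₀₀`. The entry `A₀₀` itself does not occur. -/
def schur {n : ℕ} (A : Matrix (Fin (n + 1)) (Fin (n + 1)) HC) (t : ℂ) :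
    Matrix (Fin n) (Fin n) HC :=
  Matrix.of fun i j => A i.succ j.succ - t • (A i.succ 0 * A 0 j.succ)

/-- Expansion in powers of `t` of an ordered product of entries of `schur A t`: the terms of order
`0` and `1` are explicit, everything of higher order is collected in `R`. -/
lemma mon_schur {n : ℕ} (A : Matrix (Fin (n + 1)) (Fin (n + 1)) HC) (L : List (Fin n × Fin n)) :
    ∃ R : Quaternion ℂ[X], ∀ t : ℂ, mon (schur A t) L =
      mon A (L.map (Prod.map Fin.succ Fin.succ)) - t • ((qlists L).map (mon A)).sum
        + t ^ 2 • ev t R := by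
  induction L with
  | nil => exact ⟨0, fun t => by simp [mon, qlists, ev_zero]⟩
  | cons p L ih =>
    obtain ⟨R, hR⟩ := ih
    set x := A p.1.succ p.2.succ
    set y := A p.1.succ 0 * A 0 p.2.succ with hy
    set P := mon A (L.map (Prod.map Fin.succ Fin.succ)) with hP
    set Q := ((qlists L).map (mon A)).sum with hQ
    have e1 : mon A ((p :: L).map (Prod.map Fin.succ Fin.succ)) = x * P := by
      simp [mon, hP, x]
    have e2 : ((qlists (p :: L)).map (mon A)).sum = y * P + x * Q := by
      have : ((qlists L).map fun M => mon A ((p.1.succ, p.2.succ) :: M)) =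
          (qlists L).map fun M => x * mon A M := by
        simp [mon, x]
      simp only [qlists, List.map_cons, List.sum_cons, List.map_map, Function.comp_def, this,
        List.sum_map_mul_left, hQ]
      simp [mon, hP, hy, mul_assoc]
    refine ⟨cst x * R + cst (y * Q) + (-X : ℂ[X]) • (cst y * R), fun t => ?_⟩
    have e3 : mon (schur A t) (p :: L) = (x - t • y) * mon (schur A t) L := by
      simp [mon, schur, x, hy]
    rw [e1, e2, e3, hR]
    simp only [ev_add, ev_mul, ev_smul, ev_cst, eval_neg, eval_X]
    simp only [sub_mul, mul_add, mul_sub, smul_add, HC_smul_mul, HC_mul_smul,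
      smul_smul, pow_two]
    module

lemma val_schur {n : ℕ} (A : Matrix (Fin (n + 1)) (Fin (n + 1)) HC)
    (T : List (ℂ × List (Fin n × Fin n))) :
    ∃ R : Quaternion ℂ[X], ∀ t : ℂ, val (schur A t) T =
      val A (T.map fun p => (p.1, p.2.map (Prod.map Fin.succ Fin.succ)))
        + t • val A (T.flatMap fun p => (qlists p.2).map fun M => (-p.1, M))
        + t ^ 2 • ev t R := by
  induction T with
  | nil => exact ⟨0, fun t => by simp [val, ev_zero]⟩
  | cons p T ih =>
    obtain ⟨R, hR⟩ := ih
    obtain ⟨R', hR'⟩ := mon_schur A p.2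
    refine ⟨R + (C p.1) • R', fun t => ?_⟩
    have h := hR t
    have e : (((qlists p.2).map fun M => (-p.1) • mon A M)).sum
        = (-p.1) • ((qlists p.2).map (mon A)).sum := by
      rw [List.smul_sum, List.map_map]; rfl
    simp only [val, List.map_cons, List.sum_cons, List.flatMap_cons, List.map_append,
      List.sum_append, List.map_map, Function.comp_def, e, ev_add, ev_smul, eval_C, hR'] at h ⊢
    rw [h]
    module

/-! ### Removing the negative powers of the corner entry -/

/-- A function continuous at `0` that agrees off `0` with a Laurent polynomial having no powers
above `a` has no negative powers, because `t g(t)` is unbounded as `t → ∞` unless `g = 0`. The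
formula then extends to `a = 0` by continuity. -/
lemma laurent {f : ℂ → ℂ} (hf : ContinuousAt f 0) (g : ℂ[X]) (p q : ℂ)
    (h : ∀ a : ℂ, a ≠ 0 → f a = a * p + q + a⁻¹ * g.eval a⁻¹) (a : ℂ) : f a = a * p + q := by
  have hf' : Tendsto f (𝓝[≠] 0) (𝓝 (f 0)) := hf.tendsto.mono_left nhdsWithin_le_nhds
  have hpq : Tendsto (fun a : ℂ => a * p + q) (𝓝[≠] 0) (𝓝 (0 * p + q)) :=
    (Continuous.tendsto (by fun_prop) 0).mono_left nhdsWithin_le_nhds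
  have hg : g = 0 := by
    by_contra hg
    have hdeg : 0 < (X * g).degree := by
      rw [degree_eq_natDegree (mul_ne_zero X_ne_zero hg), natDegree_X_mul hg]
      exact_mod_cast Nat.succ_pos _
    have hinf : Tendsto (fun a : ℂ => ‖a⁻¹‖) (𝓝[≠] 0) atTop :=
      tendsto_norm_inv_nhdsNE_zero_atTop
    have h1 := (X * g).tendsto_norm_atTop hdeg hinf
    have h2 := (hf'.sub hpq).norm
    refine not_tendsto_nhds_of_tendsto_atTop h1 _ (h2.congr' ?_)
    filter_upwards [self_mem_nhdsWithin] with a ha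
    rw [h a ha, eval_mul, eval_X, add_sub_cancel_left]
  subst hg
  by_cases ha : a = 0
  · subst ha
    refine tendsto_nhds_unique (hf'.congr' ?_) hpq
    filter_upwards [self_mem_nhdsWithin] with a ha
    rw [h a ha]; simp
  · rw [h a ha]; simp

/-- The matrix `A` with its upper left entry replaced by the scalar `a`. -/
def corner {n : ℕ} (A : Matrix (Fin (n + 1)) (Fin (n + 1)) HC) (a : ℂ) :
    Matrix (Fin (n + 1)) (Fin (n + 1)) HC :=
  fun i j => if i = 0 ∧ j = 0 then cq a else A i j

lemma corner_herm {n : ℕ} {A : Matrix (Fin (n + 1)) (Fin (n + 1)) HC} (hA : IsHerm A) (a : ℂ) :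
    IsHerm (corner A a) := by
  intro i j
  by_cases h : i = 0 ∧ j = 0
  · simp only [corner, h, and_self, if_true]
    ext <;> simp
  · have h' : ¬ (j = 0 ∧ i = 0) := fun h' => h h'.symm
    simp [corner, h, h', hA i j]

lemma corner_self {n : ℕ} {A : Matrix (Fin (n + 1)) (Fin (n + 1)) HC} (hA : IsHerm A) :
    corner A (A 0 0).re = A := by
  ext1 i j
  by_cases h : i = 0 ∧ j = 0
  · simp [corner, h, ← eq_cq_of_qdia (hA 0 0)]
  · simp [corner, h]

lemma continuous_comp : Continuous fun q : HC => (q.re, q.imI, q.imJ, q.imK) :=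
  continuous_induced_dom

lemma continuous_cq : Continuous cq :=
  continuous_induced_rng.2 (by simp only [Function.comp_def, cq]; fun_prop)

lemma continuous_corner {n : ℕ} (A : Matrix (Fin (n + 1)) (Fin (n + 1)) HC) :
    Continuous (corner A) := by
  refine continuous_pi fun i => continuous_pi fun j => ?_
  by_cases h : i = 0 ∧ j = 0
  · simpa [corner, h] using continuous_cq
  · simpa [corner, h] using continuous_const

lemma schur_herm {n : ℕ} {A : Matrix (Fin (n + 1)) (Fin (n + 1)) HC} (hA : IsHerm A) (t : ℂ) :
    IsHerm (schur A t) := by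
  intro i j
  simp [schur, qdia_sub, qdia_smul, qdia_mul, hA _ _]

lemma D_corner {D : ∀ n : ℕ, Matrix (Fin (n + 1)) (Fin (n + 1)) HC → HC}
    (hD : IsDtSeq D) (n : ℕ) {A : Matrix (Fin (n + 2)) (Fin (n + 2)) HC} (hA : IsHerm A)
    {a : ℂ} (ha : a ≠ 0) : D (n + 1) (corner A a) = a • D n (schur A a⁻¹) := by
  have h0 : corner A a 0 0 = cq a := by simp [corner]
  have hne : cq a ≠ 0 := fun h => ha (congrArg (fun q : HC => q.re) h)
  rw [hD.2.2 n _ (corner_herm hA a) (by rwa [h0]), h0, cq_mul]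
  congr 2
  ext1 i j
  simp [corner, schur, inverse_cq ha, cq_mul, HC_smul_mul]

lemma continuous_D_corner {D : ∀ n : ℕ, Matrix (Fin (n + 1)) (Fin (n + 1)) HC → HC}
    (hD : IsDtSeq D) (n : ℕ) {A : Matrix (Fin (n + 1)) (Fin (n + 1)) HC} (hA : IsHerm A) :
    Continuous fun a => D n (corner A a) :=
  (hD.1 n).comp_continuous (continuous_corner A) (corner_herm hA)

/-- The determinants take scalar values. -/
lemma D_scalar {D : ∀ n : ℕ, Matrix (Fin (n + 1)) (Fin (n + 1)) HC → HC}
    (hD : IsDtSeq D) (n : ℕ) : ∀ A, IsHerm A → D n A = cq (D n A).re := by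
  induction n with
  | zero =>
    intro A hA
    rw [hD.2.1 A hA]
    exact eq_cq_of_qdia (hA 0 0)
  | succ n ih =>
    intro A hA
    have hc := continuous_comp.comp (continuous_D_corner hD (n + 1) hA)
    have key : ∀ a : ℂ, a ≠ 0 → D (n + 1) (corner A a) = cq (a * (D n (schur A a⁻¹)).re) := by
      intro a ha
      rw [D_corner hD n hA ha, ih _ (schur_herm hA _)]
      ext <;> simp
    have h1 := laurent (f := fun a => (D (n + 1) (corner A a)).imI)
      hc.snd.fst.continuousAt 0 0 0 (fun a ha => by simp [key a ha]) (A 0 0).re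
    have h2 := laurent (f := fun a => (D (n + 1) (corner A a)).imJ)
      hc.snd.snd.fst.continuousAt 0 0 0 (fun a ha => by simp [key a ha]) (A 0 0).re
    have h3 := laurent (f := fun a => (D (n + 1) (corner A a)).imK)
      hc.snd.snd.snd.continuousAt 0 0 0 (fun a ha => by simp [key a ha]) (A 0 0).re
    simp only [corner_self hA] at h1 h2 h3
    ext <;> simp [h1, h2, h3]

lemma val_append {n : ℕ} (A : Matrix (Fin n) (Fin n) HC) (S T) :
    val A (S ++ T) = val A S + val A T := by
  simp [val]

/-- Each determinant is a fixed linear combination of ordered products, one factor from each row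
and each column. -/
lemma D_form {D : ∀ n : ℕ, Matrix (Fin (n + 1)) (Fin (n + 1)) HC → HC}
    (hD : IsDtSeq D) (n : ℕ) : ∃ T : List (ℂ × List (Fin (n + 1) × Fin (n + 1))),
      (∀ p ∈ T, Good p.2) ∧ ∀ A, IsHerm A → D n A = val A T := by
  induction n with
  | zero =>
    refine ⟨[(1, [(0, 0)])], ?_, ?_⟩
    · simp [Good, List.finRange_succ]
    · intro A hA
      simp [val, mon, hD.2.1 A hA]
  | succ n ih =>
    obtain ⟨T, hT, hval⟩ := ih
    refine ⟨(T.map fun p => (p.1, (0, 0) :: p.2.map (Prod.map Fin.succ Fin.succ))) ++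
      T.flatMap fun p => (qlists p.2).map fun M => (-p.1, M), ?_, ?_⟩
    · intro p hp
      simp only [List.mem_append, List.mem_map, List.mem_flatMap] at hp
      rcases hp with ⟨q, hq, rfl⟩ | ⟨q, hq, M, hM, rfl⟩
      · exact good_cons (hT q hq)
      · exact good_qlists (hT q hq) M hM
    · intro A hA
      obtain ⟨R, hR⟩ := val_schur A T
      set P := val A (T.map fun p => (p.1, p.2.map (Prod.map Fin.succ Fin.succ))) with hP
      set Q := val A (T.flatMap fun p => (qlists p.2).map fun M => (-p.1, M)) with hQ
      have hP' : val A (T.map fun p => (p.1, (0, 0) :: p.2.map (Prod.map Fin.succ Fin.succ)))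
          = (A 0 0).re • P := by
        rw [← cq_mul, ← eq_cq_of_qdia (hA 0 0), hP]
        simp only [val, List.map_map, Function.comp_def, ← List.sum_map_mul_left, mon,
          List.map_cons, List.prod_cons, HC_mul_smul]
      have hc := continuous_comp.comp (continuous_D_corner hD (n + 1) hA)
      -- The Laurent expansion in the corner entry `a`; `P`, `Q`, `R` do not depend on `a`.
      have key : ∀ a : ℂ, a ≠ 0 →
          D (n + 1) (corner A a) = a • P + Q + a⁻¹ • ev a⁻¹ R := by
        intro a ha
        rw [D_corner hD n hA ha, hval _ (schur_herm hA _), hR]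
        simp only [smul_add, smul_smul, mul_inv_cancel₀ ha, one_smul]
        congr 2
        field_simp
      have h0 := laurent (f := fun a => (D (n + 1) (corner A a)).re)
        hc.fst.continuousAt R.re P.re Q.re (fun a ha => by simp [key a ha]) (A 0 0).re
      have h1 := laurent (f := fun a => (D (n + 1) (corner A a)).imI)
        hc.snd.fst.continuousAt R.imI P.imI Q.imI (fun a ha => by simp [key a ha]) (A 0 0).re
      have h2 := laurent (f := fun a => (D (n + 1) (corner A a)).imJ)
        hc.snd.snd.fst.continuousAt R.imJ P.imJ Q.imJ
        (fun a ha => by simp [key a ha]) (A 0 0).re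
      have h3 := laurent (f := fun a => (D (n + 1) (corner A a)).imK)
        hc.snd.snd.snd.continuousAt R.imK P.imK Q.imK
        (fun a ha => by simp [key a ha]) (A 0 0).re
      simp only [corner_self hA] at h0 h1 h2 h3
      rw [val_append, hP', ← hQ]
      ext <;> simp [h0, h1, h2, h3]

/-! ### Passing to pairs of permutations -/

lemma Good.exists_perm {n : ℕ} {L : List (Fin n × Fin n)} (hL : Good L) :
    ∃ σ π : Equiv.Perm (Fin n), L = List.ofFn fun k => (σ k, π k) := by
  have hlen : L.length = n := by simpa using hL.1.length_eq
  have h1 : Function.Injective fun k : Fin n => (L.get (k.cast hlen.symm)).1 := by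
    have := List.nodup_iff_injective_get.1 (hL.1.nodup_iff.2 (List.nodup_finRange n))
    intro a b hab
    have := @this (a.cast (by simp [hlen])) (b.cast (by simp [hlen])) (by simpa using hab)
    simpa [Fin.ext_iff] using this
  have h2 : Function.Injective fun k : Fin n => (L.get (k.cast hlen.symm)).2 := by
    have := List.nodup_iff_injective_get.1 (hL.2.nodup_iff.2 (List.nodup_finRange n))
    intro a b hab
    have := @this (a.cast (by simp [hlen])) (b.cast (by simp [hlen])) (by simpa using hab)
    simpa [Fin.ext_iff] using this
  refine ⟨Equiv.ofBijective _ (Finite.injective_iff_bijective.1 h1),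
    Equiv.ofBijective _ (Finite.injective_iff_bijective.1 h2), ?_⟩
  apply List.ext_get
  · simp [hlen]
  · intro i _ _
    simp

lemma sum_update {ι : Type*} [Fintype ι] [DecidableEq ι] (f : ι → ι → HC) (c : ι → ι → ℂ)
    (a : ℂ) (i j : ι) :
    ∑ σ, ∑ π, ((if σ = i ∧ π = j then a else 0) + c σ π) • f σ π
      = a • f i j + ∑ σ, ∑ π, c σ π • f σ π := by
  simp only [HC_add_smul, Finset.sum_add_distrib]
  congr 1
  rw [Finset.sum_eq_single i, Finset.sum_eq_single j]
  · simp
  · intro π _ h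
    simp [h, HC_zero_smul]
  · simp
  · intro σ _ h
    simp [h, HC_zero_smul]
  · simp

lemma val_eq_sum {n : ℕ} (T : List (ℂ × List (Fin n × Fin n))) (hT : ∀ p ∈ T, Good p.2) :
    ∃ c : Equiv.Perm (Fin n) → Equiv.Perm (Fin n) → ℂ, ∀ A : Matrix (Fin n) (Fin n) HC,
      val A T = ∑ σ : Equiv.Perm (Fin n), ∑ π : Equiv.Perm (Fin n),
          c σ π • (List.ofFn fun k : Fin n => A (σ k) (π k)).prod := by
  induction T with
  | nil =>
    refine ⟨fun _ _ => 0, fun A => ?_⟩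
    simp only [HC_zero_smul, Finset.sum_const_zero]
    rfl
  | cons p T ih =>
    obtain ⟨c, hc⟩ := ih fun q hq => hT q (List.mem_cons_of_mem _ hq)
    obtain ⟨σ₀, π₀, hL⟩ := (hT p List.mem_cons_self).exists_perm
    refine ⟨fun σ π => (if σ = σ₀ ∧ π = π₀ then p.1 else 0) + c σ π, fun A => ?_⟩
    have e : val A (p :: T) = p.1 • mon A p.2 + val A T := by simp [val]
    have e' : mon A p.2 = (List.ofFn fun k : Fin n => A (σ₀ k) (π₀ k)).prod := by
      rw [hL, mon, List.map_ofFn]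
      rfl
    rw [e, hc A, e']
    exact (sum_update (fun σ π => (List.ofFn fun k : Fin n => A (σ k) (π k)).prod)
      c p.1 σ₀ π₀).symm

/-! ### Homogeneity and pencils `z • B + A` -/

lemma mon_smul {n : ℕ} (α : ℂ) (A : Matrix (Fin n) (Fin n) HC) (L : List (Fin n × Fin n)) :
    mon (α • A) L = α ^ L.length • mon A L := by
  induction L with
  | nil => simp [mon]
  | cons p L ih =>
    simp only [mon, List.map_cons, List.prod_cons, List.length_cons, Matrix.smul_apply] at ih ⊢
    rw [ih, HC_smul_mul, HC_mul_smul, smul_smul, pow_succ']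

lemma val_smul {n : ℕ} (α : ℂ) (A : Matrix (Fin n) (Fin n) HC)
    (T : List (ℂ × List (Fin n × Fin n))) (hT : ∀ p ∈ T, Good p.2) :
    val (α • A) T = α ^ n • val A T := by
  simp only [val, List.smul_sum, List.map_map]
  congr 1
  refine List.map_congr_left fun p hp => ?_
  have hlen : p.2.length = n := by simpa using (hT p hp).1.length_eq
  simp only [mon_smul, hlen, Function.comp_apply]
  rw [smul_smul, smul_smul, mul_comm]

/-- All four components of `q` have degree at most `d`, and their coefficients at degree `d` are
the components of `y`. -/
structure HasTop (d : ℕ) (q : Quaternion ℂ[X]) (y : HC) : Prop where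
  dre : q.re.natDegree ≤ d
  dimI : q.imI.natDegree ≤ d
  dimJ : q.imJ.natDegree ≤ d
  dimK : q.imK.natDegree ≤ d
  cre : q.re.coeff d = y.re
  cimI : q.imI.coeff d = y.imI
  cimJ : q.imJ.coeff d = y.imJ
  cimK : q.imK.coeff d = y.imK

lemma HasTop.mul {d e : ℕ} {p q : Quaternion ℂ[X]} {x y : HC} (hp : HasTop d p x)
    (hq : HasTop e q y) : HasTop (d + e) (p * q) (x * y) := by
  obtain ⟨p0, p1, p2, p3, x0, x1, x2, x3⟩ := hp
  obtain ⟨q0, q1, q2, q3, y0, y1, y2, y3⟩ := hq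
  have hadd : ∀ {u v : ℂ[X]}, u.natDegree ≤ d + e → v.natDegree ≤ d + e →
      (u + v).natDegree ≤ d + e := fun hu hv => natDegree_add_le_of_degree_le hu hv
  have hsub : ∀ {u v : ℂ[X]}, u.natDegree ≤ d + e → v.natDegree ≤ d + e →
      (u - v).natDegree ≤ d + e := fun hu hv => (natDegree_sub_le _ _).trans (max_le hu hv)
  have hmul : ∀ {u v : ℂ[X]}, u.natDegree ≤ d → v.natDegree ≤ e →
      (u * v).natDegree ≤ d + e := fun hu hv => natDegree_mul_le_of_le hu hv
  have hc : ∀ {u v : ℂ[X]}, u.natDegree ≤ d → v.natDegree ≤ e →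
      (u * v).coeff (d + e) = u.coeff d * v.coeff e :=
    fun hu hv => coeff_mul_add_eq_of_natDegree_le hu hv
  constructor
  · rw [Quaternion.re_mul]
    exact hsub (hsub (hsub (hmul p0 q0) (hmul p1 q1)) (hmul p2 q2)) (hmul p3 q3)
  · rw [Quaternion.imI_mul]
    exact hsub (hadd (hadd (hmul p0 q1) (hmul p1 q0)) (hmul p2 q3)) (hmul p3 q2)
  · rw [Quaternion.imJ_mul]
    exact hadd (hadd (hsub (hmul p0 q2) (hmul p1 q3)) (hmul p2 q0)) (hmul p3 q1)
  · rw [Quaternion.imK_mul]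
    exact hadd (hsub (hadd (hmul p0 q3) (hmul p1 q2)) (hmul p2 q1)) (hmul p3 q0)
  · simp only [Quaternion.re_mul, coeff_sub, hc, x0, x1, x2, x3, y0, y1, y2, y3,
      p0, p1, p2, p3, q0, q1, q2, q3]
  · simp only [Quaternion.imI_mul, coeff_sub, coeff_add, hc, x0, x1, x2, x3, y0, y1, y2, y3,
      p0, p1, p2, p3, q0, q1, q2, q3]
  · simp only [Quaternion.imJ_mul, coeff_sub, coeff_add, hc, x0, x1, x2, x3, y0, y1, y2, y3,
      p0, p1, p2, p3, q0, q1, q2, q3]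
  · simp only [Quaternion.imK_mul, coeff_sub, coeff_add, hc, x0, x1, x2, x3, y0, y1, y2, y3,
      p0, p1, p2, p3, q0, q1, q2, q3]

lemma HasTop.add {d : ℕ} {p q : Quaternion ℂ[X]} {x y : HC} (hp : HasTop d p x)
    (hq : HasTop d q y) : HasTop d (p + q) (x + y) where
  dre := natDegree_add_le_of_degree_le hp.dre hq.dre
  dimI := natDegree_add_le_of_degree_le hp.dimI hq.dimI
  dimJ := natDegree_add_le_of_degree_le hp.dimJ hq.dimJ
  dimK := natDegree_add_le_of_degree_le hp.dimK hq.dimK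
  cre := by simp [hp.cre, hq.cre]
  cimI := by simp [hp.cimI, hq.cimI]
  cimJ := by simp [hp.cimJ, hq.cimJ]
  cimK := by simp [hp.cimK, hq.cimK]

lemma HasTop.smul {d : ℕ} {q : Quaternion ℂ[X]} {y : HC} (c : ℂ) (hq : HasTop d q y) :
    HasTop d ((C c) • q) (c • y) where
  dre := (natDegree_C_mul_le _ _).trans hq.dre
  dimI := (natDegree_C_mul_le _ _).trans hq.dimI
  dimJ := (natDegree_C_mul_le _ _).trans hq.dimJ
  dimK := (natDegree_C_mul_le _ _).trans hq.dimK
  cre := by simp [hq.cre]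
  cimI := by simp [hq.cimI]
  cimJ := by simp [hq.cimJ]
  cimK := by simp [hq.cimK]

lemma mon_pencil {n : ℕ} (A B : Matrix (Fin n) (Fin n) HC) (L : List (Fin n × Fin n)) :
    ∃ q : Quaternion ℂ[X], HasTop L.length q (mon B L) ∧ ∀ z, ev z q = mon (z • B + A) L := by
  induction L with
  | nil =>
    refine ⟨cst 1, ?_, fun z => by simp [mon, ev_cst]⟩
    constructor <;> simp [mon]
  | cons p L ih =>
    obtain ⟨q, hq, hev⟩ := ih
    refine ⟨((X : ℂ[X]) • cst (B p.1 p.2) + cst (A p.1 p.2)) * q, ?_, fun z => ?_⟩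
    · have : HasTop 1 ((X : ℂ[X]) • cst (B p.1 p.2) + cst (A p.1 p.2)) (B p.1 p.2) := by
        have hd : ∀ u v : ℂ, (X * C u + C v : ℂ[X]).natDegree ≤ 1 := fun u v => by
          compute_degree
        constructor
        iterate 4 · exact hd _ _
        all_goals simp [coeff_C]
      have h := this.mul hq
      rw [add_comm] at h
      simpa [mon] using h
    · rw [ev_mul, hev, ev_add, ev_smul, ev_cst, ev_cst]
      simp [mon]

lemma val_pencil {n : ℕ} (A B : Matrix (Fin n) (Fin n) HC)
    (T : List (ℂ × List (Fin n × Fin n))) (hT : ∀ p ∈ T, Good p.2) :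
    ∃ q : Quaternion ℂ[X], HasTop n q (val B T) ∧ ∀ z, ev z q = val (z • B + A) T := by
  induction T with
  | nil =>
    refine ⟨0, ?_, fun z => by simp [val, ev_zero]⟩
    constructor <;> simp [val]
  | cons p T ih =>
    obtain ⟨q, hq, hev⟩ := ih fun q hq => hT q (List.mem_cons_of_mem _ hq)
    obtain ⟨r, hr, hev'⟩ := mon_pencil A B p.2
    have hlen : p.2.length = n := by simpa using (hT p List.mem_cons_self).1.length_eq
    rw [hlen] at hr
    have e : ∀ A : Matrix (Fin n) (Fin n) HC, val A (p :: T) = p.1 • mon A p.2 + val A T :=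
      fun A => by simp [val]
    refine ⟨(C p.1) • r + q, by rw [e]; exact (hr.smul _).add hq, fun z => ?_⟩
    rw [e, ev_add, ev_smul, hev, hev', eval_C]

lemma herm_pencil {n : ℕ} {A B : Matrix (Fin n) (Fin n) HC} (hA : IsHerm A) (hB : IsHerm B)
    (z : ℂ) : IsHerm (z • B + A) := by
  intro i j
  have h : ∀ x y : HC, qdia (x + y) = qdia x + qdia y := fun x y => by
    ext <;> simp <;> ring
  simp [h, qdia_smul, hA i j, hB i j]

/-- For every `n ≥ 1` (here `D n = dt_{n+1}`):
(a) `dt_n(α·x) = αⁿ·dt_n(x)`;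
(b) `dt_n` is given by a fixed complex-linear combination of ordered products
`x_{σ(1)π(1)} ⋯ x_{σ(n)π(n)}` over pairs of permutations;
(c) `λ ↦ dt_n(λ·y + x)` is a complex polynomial of degree at most `n` whose coefficient
at `λⁿ` is `dt_n(y)` and whose constant term is `dt_n(x)`. -/
theorem statement1 (D : ∀ n : ℕ, Matrix (Fin (n + 1)) (Fin (n + 1)) HC → HC)
    (hD : IsDtSeq D) (n : ℕ) :
    (∀ (A : Matrix (Fin (n + 1)) (Fin (n + 1)) HC), IsHerm A → ∀ α : ℂ,
      D n (α • A) = α ^ (n + 1) • D n A) ∧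
    (∃ c : Equiv.Perm (Fin (n + 1)) → Equiv.Perm (Fin (n + 1)) → ℂ,
      ∀ (A : Matrix (Fin (n + 1)) (Fin (n + 1)) HC), IsHerm A →
        D n A = ∑ σ : Equiv.Perm (Fin (n + 1)), ∑ π : Equiv.Perm (Fin (n + 1)),
          c σ π • (List.ofFn fun k : Fin (n + 1) => A (σ k) (π k)).prod) ∧
    (∀ (A B : Matrix (Fin (n + 1)) (Fin (n + 1)) HC), IsHerm A → IsHerm B →
      ∃ p : Polynomial ℂ, p.natDegree ≤ n + 1 ∧
        cq (p.coeff (n + 1)) = D n B ∧ cq (p.coeff 0) = D n A ∧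
        ∀ z : ℂ, cq (Polynomial.eval z p) = D n (z • B + A)) := by
  obtain ⟨T, hT, hval⟩ := D_form hD n
  refine ⟨fun A hA α => ?_, ?_, fun A B hA hB => ?_⟩
  · have hαA : IsHerm (α • A) := fun i j => by simp [qdia_smul, hA i j]
    rw [hval _ hαA, hval _ hA, val_smul _ _ _ hT]
  · obtain ⟨c, hc⟩ := val_eq_sum T hT
    exact ⟨c, fun A hA => (hval A hA).trans (hc A)⟩
  · obtain ⟨q, htop, hev⟩ := val_pencil A B T hT
    have hz : ∀ z : ℂ, cq (eval z q.re) = D n (z • B + A) := by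
      intro z
      have h := herm_pencil hA hB z
      rw [D_scalar hD n _ h, hval _ h, ← hev]
      rfl
    refine ⟨q.re, htop.dre, ?_, ?_, hz⟩
    · rw [D_scalar hD n _ hB, hval _ hB, htop.cre]
    · have h0 := hz 0
      have hB0 : (0 : ℂ) • B = 0 := by
        ext1 i j
        exact HC_zero_smul _
      rwa [hB0, zero_add, ← coeff_zero_eq_eval_zero] at h0
end
end

section
/- Let e ∈ H_n(ℍ_ℂ) be such that ê ∈ M_{2n}(ℂ) is a unitary matrix. Then there exists a ℂ-linear bijection T : M_n(ℍ_ℂ) → M_n(ℍ_ℂ) such that: (a) T(x·e*·y) = T(x)·T(y) and T(e·x*·e) = T(x)* for all x, y ∈ M_n(ℍ_ℂ) (that is, T is a *-isomorphism from M_n(ℍ_ℂ) equipped with the product x·_e y = x e* y and the involution x ↦ e x* e onto M_n(ℍ_ℂ) with its standard product and involution); and (b) T(xᵈ) = T(x)ᵈ for all x ∈ M_n(ℍ_ℂ). In particular, T maps H_n(ℍ_ℂ) onto H_n(ℍ_ℂ). -/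
/-!
Since `ê` is unitary, it is normal with finite spectrum in the unit circle. Interpolating square
roots of its eigenvalues gives a complex polynomial `p` such that, by the functional calculus,
`p(ê)` is unitary with square `ê` (`exists_polynomial_sqrt`). The map `A ↦ Â` is an injective
`ℂ`-algebra homomorphism carrying `*` to the adjoint, so `u = p(e)` satisfies `u u = e` and
`u* u = u u* = 1`. Moreover `ᵈ` is a `ℂ`-linear anti-automorphism fixing `e`, hence it fixes every
polynomial in `e`, in particular `u`. Then `T x = u* x u*`, with inverse `x ↦ u x u`, has all the
required properties: for example `T (x e* y) = u* x u* u* y u* = T x T y`, because `e* = u* u*`.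
-/

noncomputable section

open Matrix

/-- The conjugate transpose `A*` of a matrix of biquaternions
(transpose with `*` applied entrywise). -/
def mstarB {n : ℕ} (A : Matrix (Fin n) (Fin n) HC) : Matrix (Fin n) (Fin n) HC :=
  Matrix.of fun i j => qstar (A j i)

/-- The transpose `Aᵈ` with `⋄` applied entrywise. -/
def mdiaB {n : ℕ} (A : Matrix (Fin n) (Fin n) HC) : Matrix (Fin n) (Fin n) HC :=
  Matrix.of fun i j => qdia (A j i)

open scoped Matrix.Norms.L2Operator in
/-- A unitary complex matrix has a unitary square root which is a polynomial in it. -/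
lemma exists_polynomial_sqrt {m : Type*} [Fintype m] [DecidableEq m]
    (E : Matrix m m ℂ) (h₁ : Eᴴ * E = 1) (h₂ : E * Eᴴ = 1) :
    ∃ p : Polynomial ℂ, Polynomial.aeval E p * Polynomial.aeval E p = E ∧
      (Polynomial.aeval E p)ᴴ * Polynomial.aeval E p = 1 := by
  have hU : E ∈ unitary (Matrix m m ℂ) := ⟨h₁, h₂⟩
  have hN : IsStarNormal E := ⟨by
    rw [commute_iff_eq]
    exact h₁.trans h₂.symm⟩
  have hfin : (spectrum ℂ E).Finite := Matrix.finite_spectrum E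
  choose s hs using fun z : ℂ => IsAlgClosed.exists_pow_nat_eq z two_pos
  let p := Lagrange.interpolate hfin.toFinset id s
  have hp : ∀ z ∈ spectrum ℂ E, p.eval z = s z := fun z hz =>
    Lagrange.eval_interpolate_at_node s (v := id) (Set.injOn_id _) (hfin.mem_toFinset.2 hz)
  have hcirc : ∀ z ∈ spectrum ℂ E, ‖z‖ = 1 := fun z hz => by
    simpa using spectrum.subset_circle_of_unitary hU hz
  have hcont : ContinuousOn (fun z => p.eval z) (spectrum ℂ E) := p.continuous.continuousOn
  have hc : Polynomial.aeval E p = cfc (fun z => p.eval z) E := (cfc_polynomial p E).symm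
  refine ⟨p, ?_, ?_⟩
  · rw [hc, ← cfc_mul _ _ E hcont hcont]
    conv_rhs => rw [← cfc_id' ℂ E]
    refine cfc_congr fun z hz => ?_
    simp only [hp z hz]
    rw [← sq, hs z]
  · rw [hc, ← Matrix.star_eq_conjTranspose, ← cfc_star, ← cfc_mul _ _ E hcont.star hcont,
      ← cfc_one ℂ E]
    refine cfc_congr fun z hz => ?_
    have h := congrArg norm (hs z)
    rw [hcirc z hz, norm_pow] at h
    have h1 : ‖s z‖ = 1 := by nlinarith [norm_nonneg (s z)]
    simp only [hp z hz, Pi.one_apply, Complex.star_def]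
    rw [Complex.conj_mul', h1]
    simp

lemma hat_mul (x y : HC) : hat (x * y) = hat x * hat y := by
  ext i j
  fin_cases i <;> fin_cases j <;>
    simp [hat, Matrix.mul_apply, Fin.sum_univ_two] <;>
    ring_nf <;> simp [Complex.I_sq] <;> ring

lemma hat_add (x y : HC) : hat (x + y) = hat x + hat y := by
  ext i j
  fin_cases i <;> fin_cases j <;> simp [hat] <;> ring

lemma hat_algebraMap (c : ℂ) : hat (algebraMap ℂ HC c) = algebraMap ℂ _ c := by
  rw [Quaternion.algebraMap_def]
  ext i j
  fin_cases i <;> fin_cases j <;> simp [hat, Matrix.algebraMap_matrix_apply]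

lemma hat_one : hat 1 = 1 := by
  change hat ⟨1, 0, 0, 0⟩ = 1
  ext i j
  fin_cases i <;> fin_cases j <;> simp [hat]

lemma hat_zero : hat 0 = 0 := by
  change hat ⟨0, 0, 0, 0⟩ = 0
  ext i j
  fin_cases i <;> fin_cases j <;> simp [hat]

lemma hat_qstar (x : HC) : hat (qstar x) = (hat x)ᴴ := by
  ext i j
  fin_cases i <;> fin_cases j <;> simp [hat, qstar, qdia, qbar, sub_eq_add_neg]

lemma hat_injective : Function.Injective hat := by
  intro x y h
  have h00 := congrFun₂ h 0 0
  have h01 := congrFun₂ h 0 1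
  have h10 := congrFun₂ h 1 0
  have h11 := congrFun₂ h 1 1
  simp [hat] at h00 h01 h10 h11
  have hI := Complex.I_sq
  ext1
  · linear_combination (h00 + h11) / 2
  · linear_combination -Complex.I * (h00 - h11) / 2 + (x.imI - y.imI) * hI
  · linear_combination (h01 - h10) / 2
  · linear_combination -Complex.I * (h01 + h10) / 2 + (x.imK - y.imK) * hI

/-- The map `A ↦ Â` as a homomorphism of complex algebras. -/
def hatHom (n : ℕ) :
    Matrix (Fin n) (Fin n) HC →ₐ[ℂ] Matrix (Fin n × Fin 2) (Fin n × Fin 2) ℂ :=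
  AlgHom.ofLinearMap
    { toFun := hatM
      map_add' := fun A B => by
        ext p q
        simp [hatM, hat_add]
      map_smul' := fun c A => by
        ext p q
        simp only [hatM, Matrix.of_apply, Matrix.smul_apply, RingHom.id_apply]
        rw [Algebra.smul_def, hat_mul, hat_algebraMap, ← Algebra.smul_def, Matrix.smul_apply] }
    (by
      ext ⟨i, a⟩ ⟨j, b⟩
      change hat ((1 : Matrix (Fin n) (Fin n) HC) i j) a b = _
      by_cases h : i = j
      · subst h
        rw [Matrix.one_apply_eq]
        refine (congrFun₂ hat_one a b).trans ?_
        simp [Matrix.one_apply]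
      · rw [Matrix.one_apply_ne h]
        refine (congrFun₂ hat_zero a b).trans ?_
        simp [h])
    (fun A B => by
      ext ⟨i, a⟩ ⟨j, b⟩
      let φ : HC →+ Matrix (Fin 2) (Fin 2) ℂ := AddMonoidHom.mk' hat hat_add
      have h : hat ((A * B) i j) = ∑ k, hat (A i k) * hat (B k j) := by
        rw [Matrix.mul_apply]
        refine (map_sum φ _ _).trans (Finset.sum_congr rfl fun k _ => hat_mul _ _)
      refine (congrFun₂ h a b).trans ?_
      simp only [LinearMap.coe_mk, AddHom.coe_mk, hatM, Matrix.of_apply, Matrix.mul_apply,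
        Fintype.sum_prod_type, Matrix.sum_apply])

lemma hatHom_apply {n : ℕ} (A : Matrix (Fin n) (Fin n) HC) : hatHom n A = hatM A := rfl

lemma hatHom_injective (n : ℕ) : Function.Injective (hatHom n) := by
  intro A B h
  ext1 i j
  refine hat_injective ?_
  ext a b
  exact congrFun₂ h (i, a) (j, b)

lemma hatHom_mstarB {n : ℕ} (A : Matrix (Fin n) (Fin n) HC) :
    hatHom n (mstarB A) = (hatHom n A)ᴴ := by
  ext ⟨i, a⟩ ⟨j, b⟩
  simp only [hatHom_apply, hatM, mstarB, Matrix.of_apply, hat_qstar, Matrix.conjTranspose_apply]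

lemma mstarB_mul {n : ℕ} (A B : Matrix (Fin n) (Fin n) HC) :
    mstarB (A * B) = mstarB B * mstarB A :=
  hatHom_injective n (by simp only [map_mul, hatHom_mstarB, Matrix.conjTranspose_mul])

lemma mstarB_mstarB {n : ℕ} (A : Matrix (Fin n) (Fin n) HC) : mstarB (mstarB A) = A :=
  hatHom_injective n (by simp only [hatHom_mstarB, Matrix.conjTranspose_conjTranspose])

/-- Mathlib's `star` on `Quaternion ℂ` is the `ℂ`-linear involution `⋄`, not `*`; so `ᵈ` is
Mathlib's conjugate transpose. -/
lemma mdiaB_eq_conjTranspose {n : ℕ} (A : Matrix (Fin n) (Fin n) HC) : mdiaB A = Aᴴ := by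
  ext1 i j
  change qdia (A j i) = star (A j i)
  ext <;> simp [qdia]

lemma mdiaB_mul {n : ℕ} (A B : Matrix (Fin n) (Fin n) HC) :
    mdiaB (A * B) = mdiaB B * mdiaB A := by
  simp only [mdiaB_eq_conjTranspose, Matrix.conjTranspose_mul]

lemma mdiaB_mstarB {n : ℕ} (A : Matrix (Fin n) (Fin n) HC) :
    mdiaB (mstarB A) = mstarB (mdiaB A) := by
  ext1 i j
  change qdia (qstar (A i j)) = qstar (qdia (A i j))
  ext <;> simp [qstar, qdia, qbar]

lemma isHerm_iff {n : ℕ} (A : Matrix (Fin n) (Fin n) HC) : IsHerm A ↔ mdiaB A = A :=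
  ⟨fun h => by ext1 i j; exact h i j, fun h i j => congrFun₂ h i j⟩

/-- `ᵈ` is a `ℂ`-linear anti-automorphism, so it fixes polynomials in a fixed element. -/
lemma mdiaB_aeval {n : ℕ} {e : Matrix (Fin n) (Fin n) HC} (he : mdiaB e = e)
    (p : Polynomial ℂ) : mdiaB (Polynomial.aeval e p) = Polynomial.aeval e p := by
  induction p using Polynomial.induction_on' with
  | add p q hp hq =>
    rw [mdiaB_eq_conjTranspose] at *
    rw [map_add]
    exact (Matrix.conjTranspose_add _ _).trans (congrArg₂ _ hp hq)
  | monomial k c =>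
    rw [mdiaB_eq_conjTranspose] at *
    rw [Polynomial.aeval_monomial, ← Algebra.smul_def]
    have h : (e ^ k)ᴴ = e ^ k := by rw [Matrix.conjTranspose_pow, he]
    conv_rhs => rw [← h]
    ext1 i j
    exact Quaternion.star_smul c _

/-- Let `e ∈ H_n(ℍ_ℂ)` with `ê` a unitary complex matrix. Then there is a
`ℂ`-linear bijection `T` of `M_n(ℍ_ℂ)` which is a `*`-isomorphism from `M_n(ℍ_ℂ)` with product
`x ·_e y = x e* y` and involution `x ↦ e x* e` onto `M_n(ℍ_ℂ)` with its standard structure,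
and which commutes with `ᵈ`; in particular `T` maps `H_n(ℍ_ℂ)` onto `H_n(ℍ_ℂ)`. -/
theorem statement5 (n : ℕ) (e : Matrix (Fin (n + 1)) (Fin (n + 1)) HC)
    (he : IsHerm e)
    (heu₁ : (hatM e)ᴴ * hatM e = 1) (heu₂ : hatM e * (hatM e)ᴴ = 1) :
    ∃ T : Matrix (Fin (n + 1)) (Fin (n + 1)) HC ≃ₗ[ℂ]
        Matrix (Fin (n + 1)) (Fin (n + 1)) HC,
      (∀ x y : Matrix (Fin (n + 1)) (Fin (n + 1)) HC,
        T (x * mstarB e * y) = T x * T y) ∧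
      (∀ x : Matrix (Fin (n + 1)) (Fin (n + 1)) HC,
        T (e * mstarB x * e) = mstarB (T x)) ∧
      (∀ x : Matrix (Fin (n + 1)) (Fin (n + 1)) HC,
        T (mdiaB x) = mdiaB (T x)) ∧
      (⇑T) '' {A | IsHerm A} = {A | IsHerm A} := by
  obtain ⟨p, hp₁, hp₂⟩ := exists_polynomial_sqrt (hatM e) heu₁ heu₂
  obtain ⟨u, hu⟩ : ∃ u, u = Polynomial.aeval e p := ⟨_, rfl⟩
  have hhat : hatHom _ u = Polynomial.aeval (hatM e) p := by
    rw [hu, ← Polynomial.aeval_algHom_apply, hatHom_apply]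
  have huu : u * u = e := hatHom_injective _ (by rw [map_mul, hhat, hp₁, hatHom_apply])
  have hsu : mstarB u * u = 1 :=
    hatHom_injective _ (by rw [map_mul, hatHom_mstarB, hhat, hp₂, map_one])
  have hus : u * mstarB u = 1 :=
    hatHom_injective _ (by
      rw [map_mul, hatHom_mstarB, hhat, mul_eq_one_comm.1 hp₂, map_one])
  have hd : mdiaB u = u := by
    rw [hu]
    exact mdiaB_aeval ((isHerm_iff e).1 he) p
  have hds : mdiaB (mstarB u) = mstarB u := by rw [mdiaB_mstarB, hd]
  have hes : mstarB e = mstarB u * mstarB u := by rw [← huu, mstarB_mul]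
  have hss : mstarB (mstarB u) = u := mstarB_mstarB u
  generalize mstarB u = v at *
  have hsu' : ∀ z, v * (u * z) = z := fun z => by rw [← mul_assoc, hsu, one_mul]
  have hus' : ∀ z, u * (v * z) = z := fun z => by rw [← mul_assoc, hus, one_mul]
  let T : Matrix (Fin (n + 1)) (Fin (n + 1)) HC ≃ₗ[ℂ] Matrix (Fin (n + 1)) (Fin (n + 1)) HC :=
    { toFun := fun x => v * x * v
      invFun := fun x => u * x * u
      map_add' := fun x y => by rw [mul_add, add_mul]
      map_smul' := fun c x => by
        rw [RingHom.id_apply]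
        exact (congrArg (· * v) (Algebra.mul_smul_comm c v x)).trans
          (Algebra.smul_mul_assoc c (v * x) v)
      left_inv := fun x => by simp only [mul_assoc, hus', hsu, mul_one]
      right_inv := fun x => by simp only [mul_assoc, hsu', hus, mul_one] }
  have hT : ∀ x, T x = v * x * v := fun _ => rfl
  have hTd : ∀ x, T (mdiaB x) = mdiaB (T x) := fun x => by
    simp only [hT, mdiaB_mul, hds, mul_assoc]
  refine ⟨T, fun x y => ?_, fun x => ?_, hTd, ?_⟩
  · simp only [hT, hes, mul_assoc]
  · simp only [hT, mstarB_mul, hss, ← huu, mul_assoc, hsu', hus, mul_one]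
  · ext A
    simp only [Set.mem_image, Set.mem_ofPred_eq, isHerm_iff]
    constructor
    · rintro ⟨x, hx, rfl⟩
      rw [← hTd, hx]
    · intro hA
      refine ⟨T.symm A, T.injective ?_, T.apply_symm_apply A⟩
      rw [hTd, T.apply_symm_apply, hA]
end
end
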